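/- There exists an absolute constant C > 0 with the following property. Let X be a finite set, let (B_1, σ_1), …, (B_m, σ_m) be a collection of m bags with B_j ⊆ X and σ_j ∈ ℤ, let ε, α ∈ (0,1), let t be an integer with t ≥ (32/ε)·(C/α)², and let s ≥ 1 be an integer. Fix a classifier h : X → {0,1} whose accuracy on the collection is less than 1 − ε, i.e., |{j : h(B_j) = σ_j}| < (1 − ε)·m. Draw s independent samples from the distribution D̄ (each sample being a large bag generated by t i.i.d. uniform indices and t independent fair coins). Then the probability that h satisfies at least α·s of the s sampled large bags is at most exp(−α·s/6). -/

import Mathlib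

open Finset

/-!
Write `d j = h(B_j) - σ_j`. Once the indices of a large bag are fixed, `h` satisfies it iff the
random subset sum `∑ᵢ Xᵢ d(jᵢ)` vanishes. If `N` of the weights `d(jᵢ)` are nonzero, then the
outcomes of the `N` relevant coins with this property correspond to an antichain, so by Sperner's
theorem this has probability at most `(N + 1)^(-1/2)`. By Cauchy–Schwarz, the square of the
probability over the indices as well is at most `𝔼 1 / (N + 1) ≤ 1 / ((t + 1) p)`, where `p ≥ ε` is
the density of the violated bags. The lower bound on `t` makes a single large bag satisfied with
probability at most `α / 3`, and a Chernoff bound controls the number of satisfied large bags among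
the `s` samples.
-/

open scoped BigOperators

section MiddleBinomial

lemma sq_centralBinom_mul_le (k : ℕ) : k.centralBinom ^ 2 * (2 * k + 1) ≤ 16 ^ k := by
  induction k with
  | zero => simp
  | succ k ih =>
    refine Nat.le_of_mul_le_mul_left ?_ (by positivity : 0 < (k + 1) ^ 2)
    calc (k + 1) ^ 2 * ((k + 1).centralBinom ^ 2 * (2 * (k + 1) + 1))
        = ((k + 1) * (k + 1).centralBinom) ^ 2 * (2 * k + 3) := by ring
      _ = 4 * ((2 * k + 1) * (2 * k + 3)) * (k.centralBinom ^ 2 * (2 * k + 1)) := by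
          rw [Nat.succ_mul_centralBinom_succ]; ring
      _ ≤ 4 * (4 * (k + 1) ^ 2) * 16 ^ k := by gcongr ?_ * ?_; nlinarith
      _ = (k + 1) ^ 2 * 16 ^ (k + 1) := by ring

lemma centralBinom_succ_eq_two_mul_choose (k : ℕ) :
    (k + 1).centralBinom = 2 * (2 * k + 1).choose k := by
  rw [Nat.centralBinom, mul_add_one 2 k, Nat.choose_succ_succ,
    Nat.choose_symm_half, ← two_mul]

lemma sq_choose_half_mul_le (n : ℕ) : n.choose (n / 2) ^ 2 * (n + 1) ≤ 4 ^ n := by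
  obtain ⟨k, rfl | rfl⟩ := n.even_or_odd'
  · rw [Nat.mul_div_cancel_left k two_pos, ← Nat.centralBinom_eq_two_mul_choose, pow_mul]
    exact sq_centralBinom_mul_le k
  · have hhalf : (2 * k + 1) / 2 = k := by lia
    have hcentral := sq_centralBinom_mul_le (k + 1)
    have hpow : (16 : ℕ) ^ (k + 1) = 4 * 4 ^ (2 * k + 1) := by
      rw [← pow_succ', show 2 * k + 1 + 1 = 2 * (k + 1) by ring, pow_mul]; norm_num
    rw [centralBinom_succ_eq_two_mul_choose, hpow] at hcentral
    rw [hhalf]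
    nlinarith [Nat.zero_le ((2 * k + 1).choose k ^ 2)]

end MiddleBinomial

section UniformDensity

variable {α β K : Type*} [Fintype α] [Fintype β]

lemma dens_filter_eq_expect [Semifield K] [CharZero K] (P : α → Prop) [DecidablePred P] :
    (dens {a | P a} : K) = 𝔼 a, if P a then 1 else 0 := by
  rw [nnratCast_dens, Fintype.expect_eq_sum_div_card, sum_boole]

lemma dens_filter_equiv (e : α ≃ β) (P : β → Prop) [DecidablePred P] :
    dens {a | P (e a)} = dens {b | P b} := by
  rw [← dens_map_equiv e]
  congr 1
  ext b
  simp

lemma dens_filter_prod (P : α × β → Prop) [DecidablePred P] :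
    dens {z | P z} = 𝔼 a, dens {b | P (a, b)} := by
  simpa only [← dens_filter_eq_expect, NNRat.cast_id, univ_product_univ]
    using expect_product univ univ fun z ↦ if P z then (1 : ℚ≥0) else 0

end UniformDensity

section LittlewoodOfford

variable {ι G : Type*} [Fintype ι] [AddCommMonoid G]

/-- The random subset sum `∑ᵢ Xᵢ dᵢ` of the Littlewood–Offord problem, as a function of the
outcome `x` of the coins `Xᵢ`. -/
def coinSum (d : ι → G) (x : ι → Bool) : G :=
  ∑ i, if x i then d i else 0

lemma dens_coinSum_eq_support [DecidableEq ι] [DecidableEq G] (d : ι → G) (c : G) :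
    dens {x | coinSum d x = c} =
      dens {x : {i // ¬d i = 0} → Bool | coinSum (fun i : {i // ¬d i = 0} ↦ d i) x = c} := by
  have hsum (x : ι → Bool) :
      coinSum d x = coinSum (fun i : {i // ¬d i = 0} ↦ d i) fun i ↦ x i := by
    have hzero : ∑ i : {i // d i = 0}, (if x i then d i else 0) = 0 :=
      sum_eq_zero fun i _ ↦ by simp [i.2]
    simp only [coinSum]
    rw [← Fintype.sum_subtype_add_sum_subtype (fun i ↦ d i = 0), hzero, zero_add]
  simp only [hsum]
  refine (dens_filter_equiv (Equiv.piEquivPiSubtypeProd (fun i ↦ d i = 0) fun _ ↦ Bool)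
    fun z ↦ coinSum (fun i : {i // ¬d i = 0} ↦ d i) z.2 = c).trans ?_
  rw [dens_filter_prod]
  simp only [Fintype.expect_const]

variable [LinearOrder G]

/-- The set of coordinates at which the outcome `x` selects the larger of the two summands `0` and
`d i`. Passing from outcomes to these sets makes `coinSum d` monotone even though the weights have
mixed signs. -/
def maximizedCoords (d : ι → G) (x : ι → Bool) : Finset ι :=
  {i | x i = decide (0 < d i)}

variable [IsOrderedCancelAddMonoid G]

lemma eq_of_maximizedCoords_subset {d : ι → G} (hd : ∀ i, d i ≠ 0) {x y : ι → Bool}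
    (hxy : maximizedCoords d x ⊆ maximizedCoords d y) (hsum : coinSum d x = coinSum d y) :
    x = y := by
  have hle : ∀ i ∈ univ, (if x i then d i else 0) ≤ if y i then d i else 0 := by
    intro i _
    have hi : x i = decide (0 < d i) → y i = decide (0 < d i) := by
      simpa [maximizedCoords] using @hxy i
    rcases (hd i).lt_or_gt with h | h <;> cases hx : x i <;> cases hy : y i <;>
      simp_all [h.le, h.not_gt]
  funext i
  have hterm := (sum_eq_sum_iff_of_le hle).1 hsum i (mem_univ i)
  cases hx : x i <;> cases hy : y i <;> simp_all [(hd i).symm]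

variable [DecidableEq ι]

lemma card_coinSum_eq_le {d : ι → G} (hd : ∀ i, d i ≠ 0) (c : G) :
    #{x | coinSum d x = c} ≤ (Fintype.card ι).choose (Fintype.card ι / 2) := by
  have hinj : ∀ x ∈ ({x | coinSum d x = c} : Finset (ι → Bool)),
      ∀ y ∈ ({x | coinSum d x = c} : Finset (ι → Bool)),
      maximizedCoords d x ⊆ maximizedCoords d y → x = y := by
    intro x hx y hy hxy
    rw [mem_filter_univ] at hx hy
    exact eq_of_maximizedCoords_subset hd hxy (hx.trans hy.symm)
  rw [← card_image_of_injOn fun x hx y hy h ↦ hinj x hx y hy h.subset]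
  apply IsAntichain.sperner
  rw [coe_image]
  rintro _ ⟨x, hx, rfl⟩ _ ⟨y, hy, rfl⟩ hne hsub
  exact hne (congrArg _ (hinj x hx y hy hsub))

lemma sq_dens_coinSum_eq_mul_le_of_ne_zero {d : ι → G} (hd : ∀ i, d i ≠ 0) (c : G) :
    dens {x | coinSum d x = c} ^ 2 * (Fintype.card ι + 1) ≤ 1 := by
  have hcard : #{x | coinSum d x = c} ^ 2 * (Fintype.card ι + 1) ≤ (2 ^ Fintype.card ι) ^ 2 := by
    calc #{x | coinSum d x = c} ^ 2 * (Fintype.card ι + 1)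
        ≤ (Fintype.card ι).choose (Fintype.card ι / 2) ^ 2 * (Fintype.card ι + 1) := by
          gcongr; exact card_coinSum_eq_le hd c
      _ ≤ 4 ^ Fintype.card ι := sq_choose_half_mul_le _
      _ = (2 ^ Fintype.card ι) ^ 2 := by rw [← pow_mul, mul_comm, pow_mul]; norm_num
  rw [dens_eq_card_div_card, Fintype.card_fun, Fintype.card_bool, div_pow, div_mul_eq_mul_div]
  exact div_le_one_of_le₀ (mod_cast hcard) (by positivity)

/-- Erdős's form of the Littlewood–Offord inequality, squared so that it avoids `√` and can be
averaged by Cauchy–Schwarz. -/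
lemma sq_dens_coinSum_eq_mul_le (d : ι → G) (c : G) :
    dens {x | coinSum d x = c} ^ 2 * (#{i | d i ≠ 0} + 1) ≤ 1 := by
  rw [dens_coinSum_eq_support, ← Fintype.card_subtype]
  exact sq_dens_coinSum_eq_mul_le_of_ne_zero (fun i ↦ i.2) c

end LittlewoodOfford

section LargeBag

variable {J G : Type*}

lemma card_filter_insertNth {t : ℕ} (P : J → Prop) [DecidablePred P] (i : Fin (t + 1)) {a : J}
    (ha : P a) (j : Fin t → J) :
    #{k | P (i.insertNth (α := fun _ ↦ J) a j k)} = #{k | P (j k)} + 1 := by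
  simp only [card_filter, Fin.sum_univ_succAbove _ i, Fin.insertNth_apply_same,
    Fin.insertNth_apply_succAbove, ha, if_true, add_comm]

variable [Fintype J]

lemma expect_ite_one_div_card {t : ℕ} (P : J → Prop) [DecidablePred P] (i : Fin (t + 1)) :
    (𝔼 j : Fin (t + 1) → J, if P (j i) then 1 / (#{k | P (j k)} : ℚ≥0) else 0) =
      dens {a | P a} * 𝔼 j : Fin t → J, (1 / (#{k | P (j k)} + 1) : ℚ≥0) := by
  calc (𝔼 j : Fin (t + 1) → J, if P (j i) then 1 / (#{k | P (j k)} : ℚ≥0) else 0)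
      = 𝔼 z : J × (Fin t → J), (if P z.1 then 1 else 0) * (1 / (#{k | P (z.2 k)} + 1) : ℚ≥0) := by
        refine (Fintype.expect_equiv (Fin.insertNthEquiv (fun _ ↦ J) i) _ _ fun z ↦ ?_).symm
        by_cases hz : P z.1
        · simp [hz, card_filter_insertNth P i hz]
        · simp [hz]
    _ = (𝔼 a, if P a then 1 else 0) * 𝔼 j : Fin t → J, (1 / (#{k | P (j k)} + 1) : ℚ≥0) := by
        rw [Fintype.expect_mul_expect, ← univ_product_univ, expect_product]
    _ = dens {a | P a} * 𝔼 j : Fin t → J, (1 / (#{k | P (j k)} + 1) : ℚ≥0) := by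
        rw [← dens_filter_eq_expect, NNRat.cast_id]

/-- Among the hits of `t + 1` exchangeable draws choose one uniformly at random: the draws have
equal chances to be chosen, and these chances add up to at most `1`. -/
lemma succ_mul_dens_mul_expect_le [Nonempty J] (P : J → Prop) [DecidablePred P] (t : ℕ) :
    (t + 1) * dens {a | P a} * 𝔼 j : Fin t → J, (1 / (#{i | P (j i)} + 1) : ℚ≥0) ≤ 1 := by
  calc (t + 1) * dens {a | P a} * 𝔼 j : Fin t → J, (1 / (#{i | P (j i)} + 1) : ℚ≥0)
      = ∑ i : Fin (t + 1), 𝔼 j : Fin (t + 1) → J,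
          if P (j i) then 1 / (#{i | P (j i)} : ℚ≥0) else 0 := by
        simp only [expect_ite_one_div_card, sum_const, card_univ, Fintype.card_fin, nsmul_eq_mul,
          mul_assoc, Nat.cast_succ]
    _ = 𝔼 j : Fin (t + 1) → J, #{i | P (j i)} / (#{i | P (j i)} : ℚ≥0) := by
        rw [← expect_sum_comm]
        simp only [← sum_filter, sum_const, nsmul_eq_mul, mul_one_div]
    _ ≤ 1 := expect_le univ_nonempty fun j _ ↦ div_self_le_one _

/-- A sample of `D̄`: the indices of `t` bags and the outcomes of `t` coins. -/
abbrev LargeBag (J : Type*) (t : ℕ) : Type _ :=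
  (Fin t → J) × (Fin t → Bool)

variable [Nonempty J] [AddCommMonoid G] [LinearOrder G] [IsOrderedCancelAddMonoid G]

lemma sq_dens_largeBag_mul_le (d : J → G) (c : G) (t : ℕ) :
    dens {z : LargeBag J t | coinSum (fun i ↦ d (z.1 i)) z.2 = c} ^ 2 *
      ((t + 1) * dens {j | d j ≠ 0}) ≤ 1 := by
  let p (j : Fin t → J) : ℚ≥0 := dens {x | coinSum (fun i ↦ d (j i)) x = c}
  have hp_sq (j : Fin t → J) : p j ^ 2 ≤ 1 / (#{i | d (j i) ≠ 0} + 1) :=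
    (le_div_iff₀ (by positivity)).2 (sq_dens_coinSum_eq_mul_le _ c)
  have hsq : (𝔼 j, p j) ^ 2 ≤ 𝔼 j, p j ^ 2 := by
    simpa using expect_mul_sq_le_sq_mul_sq univ p 1
  rw [dens_filter_prod]
  calc (𝔼 j, p j) ^ 2 * ((t + 1) * dens {j | d j ≠ 0})
      ≤ (𝔼 j : Fin t → J, 1 / (#{i | d (j i) ≠ 0} + 1 : ℚ≥0)) * ((t + 1) * dens {j | d j ≠ 0}) := by
        gcongr
        exact hsq.trans (expect_le_expect fun j _ ↦ hp_sq j)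
    _ ≤ 1 := by
        rw [mul_comm]
        exact succ_mul_dens_mul_expect_le (fun j ↦ d j ≠ 0) t

lemma dens_largeBag_le {d : J → G} (c : G) {ε β : ℝ} (hε : 0 < ε) (hβ : 0 < β)
    (hd : ε ≤ dens {j | d j ≠ 0}) {t : ℕ} (ht : 1 / (ε * β ^ 2) ≤ t) :
    (dens {z : LargeBag J t | coinSum (fun i ↦ d (z.1 i)) z.2 = c} : ℝ) ≤ β := by
  set q := dens {z : LargeBag J t | coinSum (fun i ↦ d (z.1 i)) z.2 = c}
  have hbound : (q : ℝ) ^ 2 * ((t + 1) * dens {j | d j ≠ 0}) ≤ 1 :=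
    mod_cast sq_dens_largeBag_mul_le d c t
  have hlarge : 1 ≤ β ^ 2 * ((t + 1) * ε) := by
    rw [div_le_iff₀ (by positivity)] at ht
    nlinarith [mul_pos hε (pow_pos hβ 2)]
  refine le_of_sq_le_sq (le_of_mul_le_mul_right ?_ (by positivity : 0 < (t + 1) * ε)) hβ.le
  calc (q : ℝ) ^ 2 * ((t + 1) * ε) ≤ q ^ 2 * ((t + 1) * dens {j | d j ≠ 0}) := by gcongr
    _ ≤ 1 := hbound
    _ ≤ β ^ 2 * ((t + 1) * ε) := hlarge

end LargeBag

section Chernoff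

variable {Ω : Type*} [Fintype Ω] (P : Ω → Prop) [DecidablePred P]

lemma expect_exp_mul_card (s : ℕ) (l : ℝ) :
    𝔼 ω : Fin s → Ω, Real.exp (l * #{k | P (ω k)}) =
      (𝔼 z, if P z then Real.exp l else 1) ^ s := by
  rw [expect_pow, Fintype.piFinset_univ]
  refine expect_congr rfl fun ω _ ↦ ?_
  rw [prod_ite, prod_const, prod_const_one, mul_one, ← Real.exp_nat_mul, mul_comm]

lemma expect_ite_exp_le (l : ℝ) :
    (𝔼 z, if P z then Real.exp l else 1) ≤ Real.exp ((Real.exp l - 1) * dens {z | P z}) := by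
  have hite (z : Ω) : (if P z then Real.exp l else 1) =
      1 + (Real.exp l - 1) * if P z then 1 else 0 := by
    split_ifs <;> ring
  calc (𝔼 z, if P z then Real.exp l else 1)
      = (𝔼 _z : Ω, 1) + (Real.exp l - 1) * dens {z | P z} := by
        simp only [hite, expect_add_distrib, ← mul_expect, ← dens_filter_eq_expect]
    _ ≤ 1 + (Real.exp l - 1) * dens {z | P z} := by
        gcongr
        rw [Fintype.expect_eq_sum_div_card, sum_const, card_univ, nsmul_one]
        exact div_self_le_one _
    _ ≤ Real.exp ((Real.exp l - 1) * dens {z | P z}) := by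
        rw [add_comm]
        exact Real.add_one_le_exp _

lemma dens_le_card_filter_le_exp (s : ℕ) (a : ℝ) {l : ℝ} (hl : 0 ≤ l) :
    (dens {ω : Fin s → Ω | a ≤ #{k | P (ω k)}} : ℝ) ≤
      Real.exp (s * ((Real.exp l - 1) * dens {z | P z}) - l * a) := by
  have hmarkov (ω : Fin s → Ω) : (if a ≤ #{k | P (ω k)} then (1 : ℝ) else 0) ≤
      Real.exp (l * #{k | P (ω k)}) * Real.exp (-(l * a)) := by
    rw [← Real.exp_add]
    split_ifs with ha
    · exact Real.one_le_exp (by nlinarith)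
    · positivity
  calc (dens {ω : Fin s → Ω | a ≤ #{k | P (ω k)}} : ℝ)
      ≤ 𝔼 ω : Fin s → Ω, Real.exp (l * #{k | P (ω k)}) * Real.exp (-(l * a)) := by
        rw [dens_filter_eq_expect]
        exact expect_le_expect fun ω _ ↦ hmarkov ω
    _ = (𝔼 z, if P z then Real.exp l else 1) ^ s * Real.exp (-(l * a)) := by
        rw [← expect_mul, expect_exp_mul_card]
    _ ≤ Real.exp ((Real.exp l - 1) * dens {z | P z}) ^ s * Real.exp (-(l * a)) := by
        have hmgf : 0 ≤ 𝔼 z, if P z then Real.exp l else 1 :=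
          expect_nonneg fun z _ ↦ by positivity
        exact mul_le_mul_of_nonneg_right (pow_le_pow_left₀ hmgf (expect_ite_exp_le P l) s)
          (Real.exp_pos _).le
    _ = Real.exp (s * ((Real.exp l - 1) * dens {z | P z}) - l * a) := by
        rw [← Real.exp_nat_mul, ← Real.exp_add, ← sub_eq_add_neg]

lemma dens_mul_le_card_filter_le_exp_of_le_third {α : ℝ} (hP : (dens {z | P z} : ℝ) ≤ α / 3)
    (s : ℕ) :
    (dens {ω : Fin s → Ω | α * s ≤ #{k | P (ω k)}} : ℝ) ≤ Real.exp (-(α * s) / 6) := by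
  refine (dens_le_card_filter_le_exp P s (α * s) zero_le_one).trans (Real.exp_le_exp.2 ?_)
  have he : (Real.exp 1 - 1) * dens {z | P z} ≤ 5 / 2 * (α / 3) := by
    gcongr
    linarith [Real.exp_one_lt_d9]
  nlinarith [mul_le_mul_of_nonneg_left he (Nat.cast_nonneg (α := ℝ) s)]

end Chernoff

theorem sampled_bags_fixed_classifier_general {X J G : Type*} [Fintype J]
    [AddCommGroup G] [LinearOrder G] [IsOrderedAddMonoid G]
    (B : J → Finset X) (σ : J → G) (h : X → G) {ε α : ℝ} (hε : 0 < ε) (hα : 0 < α)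
    {t : ℕ} (ht : 9 / (ε * α ^ 2) ≤ t) (s : ℕ)
    (hacc : (#{j | ∑ x ∈ B j, h x = σ j} : ℝ) < (1 - ε) * Fintype.card J) :
    (dens {ω : Fin s → LargeBag J t | α * s ≤
      #{k | coinSum (fun i ↦ ∑ x ∈ B ((ω k).1 i), h x - σ ((ω k).1 i)) (ω k).2 = 0}} : ℝ) ≤
      Real.exp (-(α * s) / 6) := by
  have hJ : Nonempty J := by
    by_contra! hJ
    simp at hacc
  have hcard : (0 : ℝ) < Fintype.card J := mod_cast Fintype.card_pos
  let d (j : J) : G := ∑ x ∈ B j, h x - σ j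
  have hd : ε ≤ dens {j | d j ≠ 0} := by
    have hsplit : (dens {j | d j = 0} : ℝ) + dens {j | d j ≠ 0} = 1 := by
      exact_mod_cast (dens_filter_add_dens_filter_not_eq_dens (s := univ) fun j ↦ d j = 0).trans
        dens_univ
    have hdens : (dens {j | d j = 0} : ℝ) < 1 - ε := by
      simpa only [nnratCast_dens, div_lt_iff₀ hcard, d, sub_eq_zero] using hacc
    linarith
  have ht_third : 1 / (ε * (α / 3) ^ 2) ≤ t := by
    convert ht using 1
    field_simp; ring
  exact dens_mul_le_card_filter_le_exp_of_le_third _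
    (dens_largeBag_le 0 hε (by positivity) hd ht_third) s

/-- Analysis of the sampling algorithm `𝒜₂` for a fixed classifier: there is an absolute
constant `C > 0` such that whenever `t ≥ (32/ε)·(C/α)²`, any fixed classifier `h : X → {0,1}`
of accuracy less than `1 - ε` on the bags `(B_j, σ_j)` satisfies at least `α·s` of `s`
i.i.d. sampled large bags with probability at most `exp (-α s / 6)`. -/
theorem sampled_bags_fixed_classifier :
    ∃ C : ℝ, 0 < C ∧
      ∀ (X : Type) [Fintype X] (m : ℕ) (B : Fin m → Finset X) (σ : Fin m → ℤ)
        (ε α : ℝ), 0 < ε → ε < 1 → 0 < α → α < 1 →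
        ∀ t : ℕ, (32 / ε) * (C / α) ^ 2 ≤ (t : ℝ) →
        ∀ s : ℕ, 1 ≤ s →
        ∀ h : X → ℕ, (∀ x, h x ≤ 1) →
        ((Finset.univ.filter fun j : Fin m => (∑ x ∈ B j, (h x : ℤ)) = σ j).card : ℝ)
          < (1 - ε) * m →
        ((Nat.card {ω : Fin s → (Fin t → Fin m) × (Fin t → Bool) //
            α * s ≤ ((Nat.card {ℓ : Fin s //
              (∑ i, if (ω ℓ).2 i then (∑ x ∈ B ((ω ℓ).1 i), (h x : ℤ)) - σ ((ω ℓ).1 i)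
                else 0) = 0}) : ℝ)}) : ℝ)
          / (Fintype.card (Fin s → (Fin t → Fin m) × (Fin t → Bool)) : ℝ)
          ≤ Real.exp (-(α * s) / 6) := by
  refine ⟨1, one_pos, fun X _ m B σ ε α hε _ hα _ t ht s _ h _ hacc ↦ ?_⟩
  simpa [nnratCast_dens, Fintype.card_subtype, coinSum] using
    sampled_bags_fixed_classifier_general B σ (fun x ↦ (h x : ℤ)) hε hα
      (le_trans (by field_simp; norm_num) ht) s (by simpa using hacc)
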